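/- For every H ∈ (0,1] there exists a probability measure ℙ on the product measurable space ℝ^{[0,1]} (with the product σ-algebra) such that for every n ∈ ℕ and all times t_1,…,t_n ∈ [0,1], the pushforward of ℙ under the evaluation map ω ↦ (ω(t_1),…,ω(t_n)) is the centered multivariate Gaussian measure on ℝ^n with covariance matrix (R(t_i,t_j))_{1≤i,j≤n}. In other words, the canonical process B_t(ω) = ω(t) is a centered Gaussian process with covariance E[B_s B_t] = R(s,t), i.e., a fractional Brownian motion with Hurst parameter H. -/

import Mathlib

open MeasureTheory
open scoped BigOperators

/-- Fractional Brownian motion covariance kernel with Hurst parameter `H`. -/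
noncomputable def fbmCov (H s t : ℝ) : ℝ :=
  (s ^ (2 * H) + t ^ (2 * H) - |t - s| ^ (2 * H)) / 2

/-- `μ` is the centered multivariate Gaussian measure on `ℝⁿ` with covariance matrix `S`,
characterized (uniquely, by Bochner's theorem) through its characteristic function:
`μ` is a probability measure and `∫ e^{i⟨u,x⟩} dμ(x) = e^{-(1/2) uᵀ S u}` for all `u`. -/
def IsCenteredGaussianWithCov {n : ℕ} (μ : Measure (Fin n → ℝ))
    (S : Fin n → Fin n → ℝ) : Prop :=
  IsProbabilityMeasure μ ∧
    ∀ u : Fin n → ℝ,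
      ∫ x, Complex.exp (Complex.I * ((∑ i, u i * x i : ℝ) : ℂ)) ∂μ =
        Complex.exp (-((∑ i, ∑ j, u i * u j * S i j : ℝ) : ℂ) / 2)

open ProbabilityTheory in
/-- The integral of `exp (i f)` is `1`-Lipschitz in `f` for the `L²` norm. -/
lemma fbm_continuous_integral_exp {Ω : Type*} [MeasurableSpace Ω] (P : Measure Ω)
    [IsProbabilityMeasure P] :
    Continuous (fun f : Lp ℝ 2 P => ∫ ω, Complex.exp (Complex.I * ((f ω : ℝ) : ℂ)) ∂P) := by
  have hint : ∀ f : Lp ℝ 2 P,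
      Integrable (fun ω => Complex.exp (Complex.I * ((f ω : ℝ) : ℂ))) P := by
    intro f
    refine Integrable.of_bound (C := 1) ?_ ?_
    · exact (Complex.continuous_exp.comp (continuous_const.mul
        Complex.continuous_ofReal)).comp_aestronglyMeasurable (Lp.aestronglyMeasurable f)
    · filter_upwards with ω
      rw [mul_comm, Complex.norm_exp_ofReal_mul_I]
  refine LipschitzWith.continuous (K := 1) (LipschitzWith.of_dist_le_mul fun f g => ?_)
  rw [dist_eq_norm, dist_eq_norm, ← integral_sub (hint f) (hint g)]
  have hfg : Integrable (fun ω => ‖(f - g : Lp ℝ 2 P) ω‖) P :=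
    ((Lp.memLp (f - g)).integrable (by norm_num)).norm
  calc _ ≤ ∫ ω, ‖(f - g : Lp ℝ 2 P) ω‖ ∂P := by
        refine norm_integral_le_of_norm_le hfg ?_
        filter_upwards [Lp.coeFn_sub f g] with ω hω
        rw [hω, Pi.sub_apply]
        have : Complex.exp (Complex.I * ((f ω : ℝ) : ℂ)) - Complex.exp (Complex.I * ((g ω : ℝ) : ℂ))
            = Complex.exp (((g ω : ℝ) : ℂ) * Complex.I)
              * (Complex.exp (Complex.I * ((f ω - g ω : ℝ) : ℂ)) - 1) := by
          rw [mul_sub, ← Complex.exp_add, mul_one]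
          push_cast
          ring_nf
        rw [this, norm_mul, Complex.norm_exp_ofReal_mul_I, one_mul]
        exact Real.norm_exp_I_mul_ofReal_sub_one_le
    _ ≤ _ := by
        rw [integral_norm_eq_lintegral_enorm (Lp.aestronglyMeasurable _),
          ← eLpNorm_one_eq_lintegral_enorm, Lp.norm_def, NNReal.coe_one, one_mul]
        exact ENNReal.toReal_mono (Lp.eLpNorm_ne_top _)
          (eLpNorm_le_eLpNorm_of_exponent_le (by norm_num) (Lp.aestronglyMeasurable _))

open ProbabilityTheory in
/-- Existence of an isonormal Gaussian process over any real Hilbert space. -/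
lemma fbm_exists_isonormal (E : Type) [NormedAddCommGroup E] [InnerProductSpace ℝ E]
    [CompleteSpace E] :
    ∃ (Ω : Type) (_ : MeasurableSpace Ω) (P : Measure Ω) (_ : IsProbabilityMeasure P)
      (Φ : E →ₗ[ℝ] Lp ℝ 2 P), ∀ x : E,
        ∫ ω, Complex.exp (Complex.I * ((Φ x ω : ℝ) : ℂ)) ∂P
          = Complex.exp (-((‖x‖ ^ 2 : ℝ) : ℂ) / 2) := by
  classical
  obtain ⟨w, b, -⟩ := exists_hilbertBasis ℝ E
  let P : Measure (w → ℝ) := Measure.infinitePi (fun _ : w => gaussianReal 0 1)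
  have hpres : ∀ i : w, MeasurePreserving (fun ω : w → ℝ => ω i) P (gaussianReal 0 1) :=
    fun i => measurePreserving_eval_infinitePi (fun _ : w => gaussianReal 0 1) i
  have hmem : ∀ i : w, MemLp (fun ω : w → ℝ => ω i) 2 P := fun i =>
    (memLp_id_gaussianReal' 2 (by norm_num)).comp_measurePreserving (hpres i)
  have hind : iIndepFun (fun (i : w) (ω : w → ℝ) => ω i) P :=
    iIndepFun_infinitePi (P := fun _ : w => gaussianReal 0 1) (X := fun _ x => x)
      (fun _ => measurable_id)
  let ξ : w → Lp ℝ 2 P := fun i => (hmem i).toLp _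
  have hmean : ∀ i : w, ∫ ω, ω i ∂P = 0 := by
    intro i
    have := (hpres i).map_eq ▸ integral_map (μ := P) (φ := fun ω : w → ℝ => ω i)
      (hpres i).measurable.aemeasurable (f := fun x : ℝ => x) (by fun_prop)
    rw [← this]
    simp [integral_id_gaussianReal]
  have hsq : ∀ i : w, ∫ ω, ω i * ω i ∂P = 1 := by
    intro i
    have := (hpres i).map_eq ▸ integral_map (μ := P) (φ := fun ω : w → ℝ => ω i)
      (hpres i).measurable.aemeasurable (f := fun x : ℝ => x * x) (by fun_prop)
    rw [← this]
    have h2 := variance_id_gaussianReal (μ := 0) (v := 1)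
    rw [variance_eq_integral measurable_id.aemeasurable] at h2
    simp only [id, integral_id_gaussianReal, sub_zero, NNReal.coe_one] at h2
    simpa [sq] using h2
  have hinner : ∀ i j : w, inner ℝ (ξ i) (ξ j) = ∫ ω, ω i * ω j ∂P := by
    intro i j
    rw [L2.inner_def]
    refine integral_congr_ae ?_
    filter_upwards [(hmem i).coeFn_toLp, (hmem j).coeFn_toLp] with ω h1 h2
    simp only [ξ]
    rw [h1, h2]
    simp [mul_comm]
  have hon : Orthonormal ℝ ξ := by
    rw [orthonormal_iff_ite]
    intro i j
    rw [hinner]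
    split_ifs with h
    · subst h; exact hsq i
    · have := (hind.indepFun h).integral_fun_mul_eq_mul_integral
        (hmem i).aestronglyMeasurable (hmem j).aestronglyMeasurable
      rw [this, hmean i, zero_mul]
  let Φ : E →ₗ[ℝ] Lp ℝ 2 P :=
    (hon.orthogonalFamily.linearIsometry).toLinearMap ∘ₗ b.repr.toLinearEquiv.toLinearMap
  refine ⟨w → ℝ, inferInstance, P, inferInstance, Φ, fun x => ?_⟩
  have hΦ : HasSum (fun i => b.repr x i • ξ i) (Φ x) := by
    have := hon.orthogonalFamily.hasSum_linearIsometry (b.repr x)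
    simpa [Φ] using this
  have hlim := ((fbm_continuous_integral_exp P).tendsto (Φ x)).comp hΦ
  have hnorm : HasSum (fun i => (b.repr x i) ^ 2) (‖x‖ ^ 2) := by
    have h := b.hasSum_inner_mul_inner x x
    rw [real_inner_self_eq_norm_sq] at h
    refine h.congr_fun ?_ 
    intro i
    rw [b.repr_apply_apply, sq, real_inner_comm x]
  have hlim2 : Filter.Tendsto (fun s : Finset w =>
      Complex.exp (-((∑ i ∈ s, (b.repr x i) ^ 2 : ℝ) : ℂ) / 2)) Filter.atTop
      (nhds (Complex.exp (-((‖x‖ ^ 2 : ℝ) : ℂ) / 2))) := by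
    have hc : Continuous (fun r : ℝ => Complex.exp (-(r : ℂ) / 2)) := by fun_prop
    exact (hc.tendsto _).comp hnorm
  refine tendsto_nhds_unique hlim ?_
  refine hlim2.congr fun s => ?_
  simp only [Function.comp_apply]
  obtain ⟨c, hc⟩ : ∃ c : w → ℝ, ∀ i, b.repr x i = c i := ⟨fun i => b.repr x i, fun _ => rfl⟩
  simp only [hc]
  have hae : (fun ω => Complex.exp (Complex.I * (((∑ i ∈ s, c i • ξ i : Lp ℝ 2 P) ω : ℝ) : ℂ)))
      =ᵐ[P] fun ω => Complex.exp (Complex.I * ((∑ i ∈ s, c i * ω i : ℝ) : ℂ)) := by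
    have h1 : ∀ i ∈ s, (c i • ξ i : Lp ℝ 2 P) =ᵐ[P] fun ω => c i * ω i := by
      intro i _
      filter_upwards [Lp.coeFn_smul (c i) (ξ i), (hmem i).coeFn_toLp] with ω h1 h2
      rw [h1, Pi.smul_apply, smul_eq_mul, h2]
    have h2 : ∀ᵐ ω ∂P, ∀ i ∈ s, (c i • ξ i : Lp ℝ 2 P) ω = c i * ω i := by
      rw [Filter.eventually_all_finset]
      exact h1
    filter_upwards [h2, Lp.coeFn_finsetSum s (fun i => c i • ξ i)] with ω h2 h3
    rw [h3, Finset.sum_apply, Finset.sum_congr rfl h2]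
  rw [integral_congr_ae hae]
  have hind' : iIndepFun (fun (i : w) (ω : w → ℝ) => c i * ω i) P :=
    iIndepFun_infinitePi (P := fun _ : w => gaussianReal 0 1) (X := fun i x => c i * x)
      (fun _ => by fun_prop)
  have hX : ∀ i : w, AEMeasurable (fun ω : w → ℝ => c i * ω i) P := by
    intro i
    have h : Measurable (fun ω : w → ℝ => c i * ω i) := (hpres i).measurable.const_mul (c i)
    exact h.aemeasurable
  have hch := congrFun ((hind'.restrict s).charFun_map_fun_finsetSum_eq_prod
    (fun i _ => hX i)) 1
  have hsm : Measurable (fun ω : w → ℝ => ∑ i ∈ s, c i * ω i) :=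
    Finset.measurable_fun_sum s fun i _ => (hpres i).measurable.const_mul (c i)
  rw [charFun_apply_real, integral_map hsm.aemeasurable
    (Continuous.aestronglyMeasurable (by fun_prop))] at hch
  have hone : ∀ i : w, charFun (P.map (fun ω : w → ℝ => c i * ω i)) 1
      = Complex.exp (-((c i ^ 2 : ℝ) : ℂ) / 2) := by
    intro i
    have : P.map (fun ω : w → ℝ => c i * ω i) = (gaussianReal 0 1).map (fun x => c i * x) := by
      rw [← (hpres i).map_eq, Measure.map_map (by fun_prop) (by fun_prop)]
      rfl
    rw [this, charFun_map_mul, charFun_gaussianReal]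
    simp [neg_div]
  rw [Finset.prod_apply, Finset.prod_congr rfl (fun i _ => hone i), ← Complex.exp_sum] at hch
  have h4 : (-((∑ i ∈ s, (c i) ^ 2 : ℝ) : ℂ) / 2) = ∑ i ∈ s, -((c i ^ 2 : ℝ) : ℂ) / 2 := by
    push_cast
    rw [← Finset.sum_div, Finset.sum_neg_distrib]
  rw [h4, ← hch]
  refine integral_congr_ae (Filter.Eventually.of_forall fun ω => ?_)
  simp [mul_comm]

/-- A kernel given as a Gram kernel in a Hilbert space is the covariance of a Gaussian process. -/
lemma fbm_exists_of_gram (T E : Type) [NormedAddCommGroup E] [InnerProductSpace ℝ E]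
    [CompleteSpace E] (k : T → E) :
    ∃ P : Measure (T → ℝ), IsProbabilityMeasure P ∧
      ∀ (n : ℕ) (t : Fin n → T),
        IsCenteredGaussianWithCov (P.map fun ω => fun i => ω (t i))
          (fun i j => inner ℝ (k (t i)) (k (t j))) := by
  obtain ⟨Ω, _, P, _, Φ, hΦ⟩ := fbm_exists_isonormal E
  have hB : Measurable (fun (ω : Ω) (s : T) => Φ (k s) ω) :=
    measurable_pi_lambda _ fun s => (Lp.stronglyMeasurable _).measurable
  refine ⟨P.map (fun ω s => Φ (k s) ω), Measure.isProbabilityMeasure_map hB.aemeasurable,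
    fun n t => ?_⟩
  have hev : Measurable (fun (ω : T → ℝ) (i : Fin n) => ω (t i)) := by fun_prop
  rw [Measure.map_map hev hB]
  refine ⟨Measure.isProbabilityMeasure_map (hev.comp hB).aemeasurable, fun u => ?_⟩
  rw [integral_map (hev.comp hB).aemeasurable
    (Continuous.aestronglyMeasurable (by fun_prop))]
  have h := hΦ (∑ i, u i • k (t i))
  have hn : ‖∑ i, u i • k (t i)‖ ^ 2 = ∑ i, ∑ j, u i * u j * inner ℝ (k (t i)) (k (t j)) := by
    rw [← real_inner_self_eq_norm_sq, sum_inner]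
    refine Finset.sum_congr rfl fun i _ => ?_
    rw [inner_sum]
    refine Finset.sum_congr rfl fun j _ => ?_
    rw [real_inner_smul_left, real_inner_smul_right, mul_assoc]
  rw [hn] at h
  rw [← h]
  refine integral_congr_ae ?_
  have h2 : ∀ᵐ ω ∂P, ∀ i : Fin n, (u i • Φ (k (t i)) : Lp ℝ 2 P) ω = u i * Φ (k (t i)) ω := by
    rw [ae_all_iff]
    intro i
    filter_upwards [Lp.coeFn_smul (u i) (Φ (k (t i)))] with ω h1
    rw [h1, Pi.smul_apply, smul_eq_mul]
  filter_upwards [h2, Lp.coeFn_finsetSum Finset.univ (fun i => u i • Φ (k (t i)))] with ω h2 h3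
  rw [map_sum]
  simp only [map_smul]
  rw [h3, Finset.sum_apply, Finset.sum_congr rfl (fun i _ => h2 i)]
  rfl

lemma fbm_integrableOn_psi_one (H : ℝ) (hH0 : 0 < H) (hH1 : H < 1) :
    IntegrableOn (fun x : ℝ => (1 - Real.cos x) * x ^ (-1 - 2 * H)) (Set.Ioi 0) := by
  have hmeas : Measurable (fun x : ℝ => (1 - Real.cos x) * x ^ (-1 - 2 * H)) := by fun_prop
  rw [← Set.Ioc_union_Ioi_eq_Ioi (zero_le_one' ℝ)]
  refine IntegrableOn.union ?_ ?_
  · have h1 : IntegrableOn (fun x : ℝ => x ^ (1 - 2 * H)) (Set.Ioc 0 1) := by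
      rw [← intervalIntegrable_iff_integrableOn_Ioc_of_le zero_le_one]
      exact intervalIntegral.intervalIntegrable_rpow' (by linarith)
    refine Integrable.mono' h1 hmeas.aestronglyMeasurable ?_
    refine (ae_restrict_iff' measurableSet_Ioc).2 (Filter.Eventually.of_forall fun x hx => ?_)
    have hx0 : 0 < x := hx.1
    have hc := Real.cos_le_one x
    have hc2 := Real.one_sub_sq_div_two_le_cos (x := x)
    have hp : 0 ≤ x ^ (-1 - 2 * H) := Real.rpow_nonneg hx0.le _
    rw [Real.norm_of_nonneg (mul_nonneg (by linarith) hp)]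
    have e : x ^ (1 - 2 * H) = x ^ 2 * x ^ (-1 - 2 * H) := by
      rw [← Real.rpow_natCast, ← Real.rpow_add hx0]
      congr 1
      push_cast
      ring
    rw [e]
    exact mul_le_mul_of_nonneg_right (by nlinarith [sq_nonneg x]) hp
  · have h1 : IntegrableOn (fun x : ℝ => 2 * x ^ (-1 - 2 * H)) (Set.Ioi 1) :=
      (integrableOn_Ioi_rpow_of_lt (by linarith) one_pos).const_mul 2
    refine Integrable.mono' h1 hmeas.aestronglyMeasurable ?_
    refine (ae_restrict_iff' measurableSet_Ioi).2 (Filter.Eventually.of_forall fun x hx => ?_)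
    have hx0 : 0 < x := lt_trans one_pos hx
    have hc := Real.cos_le_one x
    have hc2 := Real.neg_one_le_cos x
    have hp : 0 ≤ x ^ (-1 - 2 * H) := Real.rpow_nonneg hx0.le _
    rw [Real.norm_of_nonneg (mul_nonneg (by linarith) hp)]
    exact mul_le_mul_of_nonneg_right (by linarith) hp

lemma fbm_const_pos (H : ℝ) (hH0 : 0 < H) (hH1 : H < 1) :
    0 < ∫ x in Set.Ioi (0 : ℝ), (1 - Real.cos x) * x ^ (-1 - 2 * H) := by
  rw [setIntegral_pos_iff_support_of_nonneg_ae _ (fbm_integrableOn_psi_one H hH0 hH1)]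
  · refine lt_of_lt_of_le ?_ (measure_mono (s := Set.Ioo (0 : ℝ) 1) ?_)
    · simp
    · intro x hx
      refine ⟨?_, hx.1⟩
      have hc : Real.cos x < 1 := by
        rw [← Real.cos_zero]
        exact Real.cos_lt_cos_of_nonneg_of_le_pi le_rfl
          (by linarith [hx.2, Real.pi_gt_three]) hx.1
      exact (mul_pos (by linarith) (Real.rpow_pos_of_pos hx.1 _)).ne'
  · refine (ae_restrict_iff' measurableSet_Ioi).2 (Filter.Eventually.of_forall fun x hx => ?_)
    exact mul_nonneg (by linarith [Real.cos_le_one x]) (Real.rpow_nonneg (le_of_lt hx) _)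

lemma fbm_psi (H : ℝ) (hH0 : 0 < H) (hH1 : H < 1) (a : ℝ) :
    IntegrableOn (fun x : ℝ => (1 - Real.cos (a * x)) * x ^ (-1 - 2 * H)) (Set.Ioi 0) ∧
    ∫ x in Set.Ioi (0 : ℝ), (1 - Real.cos (a * x)) * x ^ (-1 - 2 * H)
      = |a| ^ (2 * H) * ∫ x in Set.Ioi (0 : ℝ), (1 - Real.cos x) * x ^ (-1 - 2 * H) := by
  rcases eq_or_ne a 0 with rfl | ha
  · simp [Real.zero_rpow (by linarith : 2 * H ≠ 0)]
  have hb : 0 < |a| := abs_pos.2 ha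
  have heq : Set.EqOn (fun x : ℝ => (1 - Real.cos (a * x)) * x ^ (-1 - 2 * H))
      (fun x : ℝ => |a| ^ (1 + 2 * H) *
        ((1 - Real.cos (|a| * x)) * (|a| * x) ^ (-1 - 2 * H))) (Set.Ioi 0) := by
    intro x hx
    have hx0 : 0 < x := hx
    have e1 : Real.cos (|a| * x) = Real.cos (a * x) := by
      rw [← Real.cos_abs (a * x), abs_mul, abs_of_pos hx0]
    have e2 : |a| ^ (1 + 2 * H) * |a| ^ (-1 - 2 * H) = 1 := by
      rw [← Real.rpow_add hb]
      simp
    simp only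
    rw [e1, Real.mul_rpow hb.le hx0.le]
    linear_combination (-(1 - Real.cos (a * x)) * x ^ (-1 - 2 * H)) * e2
  constructor
  · rw [integrableOn_congr_fun heq measurableSet_Ioi]
    refine Integrable.const_mul ?_ _
    have := (integrableOn_Ioi_comp_mul_left_iff
      (fun x : ℝ => (1 - Real.cos x) * x ^ (-1 - 2 * H)) 0 hb).2
      (by rw [mul_zero]; exact fbm_integrableOn_psi_one H hH0 hH1)
    exact this
  · rw [setIntegral_congr_fun measurableSet_Ioi heq, integral_const_mul,
      integral_comp_mul_left_Ioi (fun x : ℝ => (1 - Real.cos x) * x ^ (-1 - 2 * H)) 0 hb,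
      mul_zero, smul_eq_mul, ← mul_assoc]
    congr 1
    rw [← Real.rpow_neg_one, ← Real.rpow_add hb]
    congr 1
    ring

/-- The fractional Brownian covariance is a Gram kernel for `H < 1`. -/
lemma fbm_gram (H : ℝ) (hH0 : 0 < H) (hH1 : H < 1) :
    ∃ k : ℝ → Lp ℂ 2 (volume.restrict (Set.Ioi (0 : ℝ))),
      ∀ s t : ℝ, 0 ≤ s → 0 ≤ t → inner ℝ (k s) (k t) = fbmCov H s t := by
  let F : ℝ → ℝ → ℂ := fun t x =>
    (((1 - Real.cos (t * x)) * x ^ (-1 / 2 - H) : ℝ) : ℂ)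
      + ((Real.sin (t * x) * x ^ (-1 / 2 - H) : ℝ) : ℂ) * Complex.I
  have hFin : ∀ s t x : ℝ, 0 < x → inner ℝ (F s x) (F t x)
      = (1 - Real.cos (s * x)) * x ^ (-1 - 2 * H) + (1 - Real.cos (t * x)) * x ^ (-1 - 2 * H)
        - (1 - Real.cos ((t - s) * x)) * x ^ (-1 - 2 * H) := by
    intro s t x hx
    have e : x ^ (-1 - 2 * H) = x ^ (-1 / 2 - H) * x ^ (-1 / 2 - H) := by
      rw [← Real.rpow_add hx]
      congr 1
      ring
    have e2 : inner ℝ (F s x) (F t x) = (F s x).re * (F t x).re + (F s x).im * (F t x).im := by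
      rw [Complex.inner, Complex.mul_re, Complex.conj_re, Complex.conj_im]
      ring
    have e3 : ∀ r, (F r x).re = (1 - Real.cos (r * x)) * x ^ (-1 / 2 - H) := by
      intro r
      simp only [F, Complex.add_re, Complex.re_ofReal_mul, Complex.I_re, Complex.ofReal_re,
        mul_zero, add_zero]
    have e4 : ∀ r, (F r x).im = Real.sin (r * x) * x ^ (-1 / 2 - H) := by
      intro r
      simp only [F, Complex.add_im, Complex.im_ofReal_mul, Complex.I_im, Complex.ofReal_im,
        mul_one, zero_add]
    rw [e2, e3, e3, e4, e4, e, sub_mul t s x, Real.cos_sub]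
    ring
  have hmeas : ∀ t, Measurable (F t) := by
    intro t
    simp only [F]
    fun_prop
  have hmem : ∀ t, MemLp (F t) 2 (volume.restrict (Set.Ioi (0 : ℝ))) := by
    intro t
    rw [memLp_two_iff_integrable_sq_norm (hmeas t).aestronglyMeasurable]
    have h := ((fbm_psi H hH0 hH1 t).1).const_mul 2
    refine Integrable.congr h ?_
    refine (ae_restrict_iff' measurableSet_Ioi).2 (Filter.Eventually.of_forall fun x hx => ?_)
    simp only
    rw [← real_inner_self_eq_norm_sq, hFin t t x hx]
    simp
    ring
  set C : ℝ := ∫ x in Set.Ioi (0 : ℝ), (1 - Real.cos x) * x ^ (-1 - 2 * H) with hC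
  have hCpos : 0 < C := fbm_const_pos H hH0 hH1
  refine ⟨fun t => (Real.sqrt (2 * C))⁻¹ • (hmem t).toLp (F t), fun s t hs ht => ?_⟩
  rw [real_inner_smul_left, real_inner_smul_right, L2.inner_def]
  have hI : ∫ x in Set.Ioi (0 : ℝ), inner ℝ ((hmem s).toLp (F s) x) ((hmem t).toLp (F t) x)
      = C * (s ^ (2 * H) + t ^ (2 * H) - |t - s| ^ (2 * H)) := by
    have : ∫ x in Set.Ioi (0 : ℝ), inner ℝ ((hmem s).toLp (F s) x) ((hmem t).toLp (F t) x)
        = ∫ x in Set.Ioi (0 : ℝ), ((1 - Real.cos (s * x)) * x ^ (-1 - 2 * H)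
          + (1 - Real.cos (t * x)) * x ^ (-1 - 2 * H)
          - (1 - Real.cos ((t - s) * x)) * x ^ (-1 - 2 * H)) := by
      refine integral_congr_ae ?_
      filter_upwards [(hmem s).coeFn_toLp, (hmem t).coeFn_toLp,
        ae_restrict_mem measurableSet_Ioi] with x h1 h2 hx
      rw [h1, h2, hFin s t x hx]
    obtain ⟨i1, v1⟩ := fbm_psi H hH0 hH1 s
    obtain ⟨i2, v2⟩ := fbm_psi H hH0 hH1 t
    obtain ⟨i3, v3⟩ := fbm_psi H hH0 hH1 (t - s)
    have i12 : IntegrableOn (fun x : ℝ => (1 - Real.cos (s * x)) * x ^ (-1 - 2 * H)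
        + (1 - Real.cos (t * x)) * x ^ (-1 - 2 * H)) (Set.Ioi 0) := i1.add i2
    rw [this, integral_sub i12 i3, integral_add i1 i2, v1, v2, v3, abs_of_nonneg hs,
      abs_of_nonneg ht, ← hC]
    ring
  rw [hI, fbmCov, ← mul_assoc, ← mul_inv, Real.mul_self_sqrt (by positivity)]
  field_simp

/-- Existence of fractional Brownian motion with Hurst parameter `H ∈ (0,1]` as a
probability measure `P` on the product space `ℝ^{[0,1]}`: for all times
`t₁,…,tₙ ∈ [0,1]`, the pushforward of `P` by `ω ↦ (ω(t₁),…,ω(tₙ))` is the centered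
Gaussian measure on `ℝⁿ` with covariance matrix `(R(tᵢ,tⱼ))_{i,j}`. -/
theorem exists_fractionalBrownianMotion (H : ℝ) (hH0 : 0 < H) (hH1 : H ≤ 1) :
    ∃ P : Measure (Set.Icc (0 : ℝ) 1 → ℝ), IsProbabilityMeasure P ∧
      ∀ (n : ℕ) (t : Fin n → Set.Icc (0 : ℝ) 1),
        IsCenteredGaussianWithCov (P.map fun ω => fun i => ω (t i))
          (fun i j => fbmCov H ((t i : ℝ)) ((t j : ℝ))) := by
  rcases hH1.lt_or_eq with h | rfl
  · obtain ⟨k, hk⟩ := fbm_gram H hH0 h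
    obtain ⟨P, hP, hG⟩ := fbm_exists_of_gram (Set.Icc (0 : ℝ) 1) _ (fun t => k (t : ℝ))
    refine ⟨P, hP, fun n t => ?_⟩
    have := hG n t
    simpa only [hk _ _ (t _).2.1 (t _).2.1] using this
  · obtain ⟨P, hP, hG⟩ := fbm_exists_of_gram (Set.Icc (0 : ℝ) 1) ℝ (fun t => (t : ℝ))
    refine ⟨P, hP, fun n t => ?_⟩
    have := hG n t
    have e : ∀ s t : ℝ, inner ℝ s t = fbmCov 1 s t := by
      intro s t
      rw [fbmCov, mul_one, Real.rpow_two, Real.rpow_two, Real.rpow_two, sq_abs]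
      simp
      ring
    simpa only [e] using this
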